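/- arXiv:2203.01740 — 2 statements merged into one kernel-verified Lean document; each statement's English description precedes it below -/
import Mathlib

section
/- Let w₁, w₂ > 0 with w₁ ≥ τ·w₂, where τ = (2·(62 − 3·√183)^(1/3) + (62 + 3·√183)^(1/3))/3. There exist a symmetric weighted two-player congestion game with weights w₁, w₂ and uniform costs, a pure Nash equilibrium A, and an action profile B such that C(B) > 0 and C(A) = (2·(w₁² + w₁·w₂ + w₂²)/(w₁ + w₂)²) · C(B). -/
open Finset Real

/-- A weighted two-player congestion game with weights `w₁, w₂`:
a finite set of resources `Fin n`, nonempty finite collections of actions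
(subsets of resources) for each player, and nonnegative affine cost
coefficients `α r`, `β r` for each resource. -/
structure CGame (w₁ w₂ : ℝ) where
  n : ℕ
  A1 : Finset (Finset (Fin n))
  A2 : Finset (Finset (Fin n))
  A1_nonempty : A1.Nonempty
  A2_nonempty : A2.Nonempty
  α : Fin n → ℝ
  β : Fin n → ℝ
  α_nonneg : ∀ r, 0 ≤ α r
  β_nonneg : ∀ r, 0 ≤ β r

namespace CGame

variable {w₁ w₂ : ℝ}

/-- The load of resource `r` under the action profile `(a₁, a₂)`. -/
def load (G : CGame w₁ w₂) (a₁ a₂ : Finset (Fin G.n)) (r : Fin G.n) : ℝ :=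
  (if r ∈ a₁ then w₁ else 0) + (if r ∈ a₂ then w₂ else 0)

/-- Uniform cost of player 1. -/
def C1uni (G : CGame w₁ w₂) (a₁ a₂ : Finset (Fin G.n)) : ℝ :=
  ∑ r ∈ a₁, (G.α r + G.β r * G.load a₁ a₂ r)

/-- Uniform cost of player 2. -/
def C2uni (G : CGame w₁ w₂) (a₁ a₂ : Finset (Fin G.n)) : ℝ :=
  ∑ r ∈ a₂, (G.α r + G.β r * G.load a₁ a₂ r)

/-- Uniform social cost. -/
def Cuni (G : CGame w₁ w₂) (a₁ a₂ : Finset (Fin G.n)) : ℝ :=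
  G.C1uni a₁ a₂ + G.C2uni a₁ a₂

/-- Proportional cost of player 1. -/
def C1prop (G : CGame w₁ w₂) (a₁ a₂ : Finset (Fin G.n)) : ℝ :=
  w₁ * ∑ r ∈ a₁, (G.α r + G.β r * G.load a₁ a₂ r)

/-- Proportional cost of player 2. -/
def C2prop (G : CGame w₁ w₂) (a₁ a₂ : Finset (Fin G.n)) : ℝ :=
  w₂ * ∑ r ∈ a₂, (G.α r + G.β r * G.load a₁ a₂ r)

/-- Proportional social cost. -/
def Cprop (G : CGame w₁ w₂) (a₁ a₂ : Finset (Fin G.n)) : ℝ :=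
  G.C1prop a₁ a₂ + G.C2prop a₁ a₂

/-- `(a₁, a₂)` is an action profile: each action is admissible for its player. -/
def IsProfile (G : CGame w₁ w₂) (a₁ a₂ : Finset (Fin G.n)) : Prop :=
  a₁ ∈ G.A1 ∧ a₂ ∈ G.A2

/-- The game is symmetric if both players have the same actions. -/
def Symm (G : CGame w₁ w₂) : Prop := G.A1 = G.A2

/-- Pure Nash equilibrium for uniform costs. -/
def IsNashUni (G : CGame w₁ w₂) (a₁ a₂ : Finset (Fin G.n)) : Prop :=
  G.IsProfile a₁ a₂ ∧
  (∀ b₁ ∈ G.A1, G.C1uni a₁ a₂ ≤ G.C1uni b₁ a₂) ∧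
  (∀ b₂ ∈ G.A2, G.C2uni a₁ a₂ ≤ G.C2uni a₁ b₂)

/-- Pure Nash equilibrium for proportional costs. -/
def IsNashProp (G : CGame w₁ w₂) (a₁ a₂ : Finset (Fin G.n)) : Prop :=
  G.IsProfile a₁ a₂ ∧
  (∀ b₁ ∈ G.A1, G.C1prop a₁ a₂ ≤ G.C1prop b₁ a₂) ∧
  (∀ b₂ ∈ G.A2, G.C2prop a₁ a₂ ≤ G.C2prop a₁ b₂)

/-- Subgame-perfect outcome with player 1 moving first, uniform costs. -/
def IsSPE1Uni (G : CGame w₁ w₂) (a₁ a₂ : Finset (Fin G.n)) : Prop :=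
  G.IsProfile a₁ a₂ ∧
  ∃ b : Finset (Fin G.n) → Finset (Fin G.n),
    (∀ x ∈ G.A1, b x ∈ G.A2) ∧
    (∀ x ∈ G.A1, ∀ y ∈ G.A2, G.C2uni x (b x) ≤ G.C2uni x y) ∧
    a₂ = b a₁ ∧
    (∀ x ∈ G.A1, G.C1uni a₁ a₂ ≤ G.C1uni x (b x))

/-- Subgame-perfect outcome with player 2 moving first, uniform costs. -/
def IsSPE2Uni (G : CGame w₁ w₂) (a₁ a₂ : Finset (Fin G.n)) : Prop :=
  G.IsProfile a₁ a₂ ∧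
  ∃ b : Finset (Fin G.n) → Finset (Fin G.n),
    (∀ x ∈ G.A2, b x ∈ G.A1) ∧
    (∀ x ∈ G.A2, ∀ y ∈ G.A1, G.C1uni (b x) x ≤ G.C1uni y x) ∧
    a₁ = b a₂ ∧
    (∀ x ∈ G.A2, G.C2uni a₁ a₂ ≤ G.C2uni (b x) x)

/-- Subgame-perfect outcome with player 1 moving first, proportional costs. -/
def IsSPE1Prop (G : CGame w₁ w₂) (a₁ a₂ : Finset (Fin G.n)) : Prop :=
  G.IsProfile a₁ a₂ ∧
  ∃ b : Finset (Fin G.n) → Finset (Fin G.n),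
    (∀ x ∈ G.A1, b x ∈ G.A2) ∧
    (∀ x ∈ G.A1, ∀ y ∈ G.A2, G.C2prop x (b x) ≤ G.C2prop x y) ∧
    a₂ = b a₁ ∧
    (∀ x ∈ G.A1, G.C1prop a₁ a₂ ≤ G.C1prop x (b x))

/-- Subgame-perfect outcome with player 2 moving first, proportional costs. -/
def IsSPE2Prop (G : CGame w₁ w₂) (a₁ a₂ : Finset (Fin G.n)) : Prop :=
  G.IsProfile a₁ a₂ ∧
  ∃ b : Finset (Fin G.n) → Finset (Fin G.n),
    (∀ x ∈ G.A2, b x ∈ G.A1) ∧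
    (∀ x ∈ G.A2, ∀ y ∈ G.A1, G.C1prop (b x) x ≤ G.C1prop y x) ∧
    a₁ = b a₂ ∧
    (∀ x ∈ G.A2, G.C2prop a₁ a₂ ≤ G.C2prop (b x) x)

end CGame

/-! In the instance below each player pays `w₁ ^ 2 + w₁ * w₂ + w₂ ^ 2` at equilibrium. Against the
opponent's equilibrium action every deviation costs exactly the same, except copying the opponent,
which costs `(w₁ + w₂) ^ 2`; so no deviation is profitable. The optimum has social cost
`(w₁ + w₂) ^ 2`. The instance needs `w₂ ≤ w₁`; since the ratio is symmetric in the weights,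
exchanging the players covers the other case. -/

namespace CGame

variable {w₁ w₂ : ℝ}

/-- The game with the roles of the two players exchanged, used to reduce to `w₂ ≤ w₁`. It is
reducible so that actions of `G` serve as actions of `G.swap`. -/
abbrev swap (G : CGame w₁ w₂) : CGame w₂ w₁ where
  n := G.n
  A1 := G.A2
  A2 := G.A1
  A1_nonempty := G.A2_nonempty
  A2_nonempty := G.A1_nonempty
  α := G.α
  β := G.β
  α_nonneg := G.α_nonneg
  β_nonneg := G.β_nonneg

theorem load_swap (G : CGame w₁ w₂) (a₁ a₂ : Finset (Fin G.n)) :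
    G.swap.load a₂ a₁ = G.load a₁ a₂ :=
  funext fun _ => add_comm _ _

theorem C1uni_swap (G : CGame w₁ w₂) (a₁ a₂ : Finset (Fin G.n)) :
    G.swap.C1uni a₂ a₁ = G.C2uni a₁ a₂ := by
  rw [C1uni, load_swap]; rfl

theorem C2uni_swap (G : CGame w₁ w₂) (a₁ a₂ : Finset (Fin G.n)) :
    G.swap.C2uni a₂ a₁ = G.C1uni a₁ a₂ := by
  rw [C2uni, load_swap]; rfl

theorem Cuni_swap (G : CGame w₁ w₂) (a₁ a₂ : Finset (Fin G.n)) :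
    G.swap.Cuni a₂ a₁ = G.Cuni a₁ a₂ := by
  rw [Cuni, C1uni_swap, C2uni_swap, add_comm]; rfl

theorem IsProfile.swap {G : CGame w₁ w₂} {a₁ a₂ : Finset (Fin G.n)} (h : G.IsProfile a₁ a₂) :
    G.swap.IsProfile a₂ a₁ :=
  And.symm h

theorem IsNashUni.swap {G : CGame w₁ w₂} {a₁ a₂ : Finset (Fin G.n)} (h : G.IsNashUni a₁ a₂) :
    G.swap.IsNashUni a₂ a₁ := by
  obtain ⟨hprofile, hbest₁, hbest₂⟩ := h
  refine ⟨hprofile.swap, fun b hb => ?_, fun b hb => ?_⟩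
  · simpa only [C1uni_swap] using hbest₂ b hb
  · simpa only [C2uni_swap] using hbest₁ b hb

end CGame

namespace lowerBoundGame

/-- The action of player 1 in the equilibrium of the lower-bound instance. -/
abbrev equilibrium₁ : Finset (Fin 5) := {3, 4}

/-- The action of player 2 in the equilibrium of the lower-bound instance. -/
abbrev equilibrium₂ : Finset (Fin 5) := {1, 2, 4}

/-- The action of player 1 in the optimal profile of the lower-bound instance. -/
abbrev optimum₁ : Finset (Fin 5) := {0, 4}

/-- The action of player 2 in the optimal profile of the lower-bound instance. -/
abbrev optimum₂ : Finset (Fin 5) := {2, 3}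

end lowerBoundGame

open lowerBoundGame in
/-- The lower-bound instance. The constant costs on resources `0` and `1` are chosen so that leaving
the equilibrium for an action of the optimal profile is cost-neutral. It is reducible so that
actions can be written as subsets of `Fin 5`. -/
abbrev lowerBoundGame (w₁ w₂ : ℝ) (h₂ : 0 ≤ w₂) (hle : w₂ ≤ w₁) : CGame w₁ w₂ where
  n := 5
  A1 := {equilibrium₁, equilibrium₂, optimum₁, optimum₂}
  A2 := {equilibrium₁, equilibrium₂, optimum₁, optimum₂}
  A1_nonempty := insert_nonempty _ _
  A2_nonempty := insert_nonempty _ _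
  α := ![w₁ ^ 2, w₁ ^ 2 - w₂ ^ 2, 0, 0, 0]
  β := ![0, 0, w₂, w₁, w₂]
  α_nonneg r := by
    have hsq : w₂ ^ 2 ≤ w₁ ^ 2 := pow_le_pow_left₀ h₂ hle 2
    fin_cases r <;> simp [sq_nonneg, hsq]
  β_nonneg r := by
    have h₁ : 0 ≤ w₁ := h₂.trans hle
    fin_cases r <;> simp [h₁, h₂]

namespace lowerBoundGame

variable {w₁ w₂ : ℝ} (h₂ : 0 ≤ w₂) (hle : w₂ ≤ w₁)

theorem C1uni_eq (a₁ a₂ : Finset (Fin 5)) :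
    (lowerBoundGame w₁ w₂ h₂ hle).C1uni a₁ a₂ =
      (if 0 ∈ a₁ then w₁ ^ 2 else 0) + (if 1 ∈ a₁ then w₁ ^ 2 - w₂ ^ 2 else 0) +
        (if 2 ∈ a₁ then w₂ * (w₁ + if 2 ∈ a₂ then w₂ else 0) else 0) +
        (if 3 ∈ a₁ then w₁ * (w₁ + if 3 ∈ a₂ then w₂ else 0) else 0) +
        (if 4 ∈ a₁ then w₂ * (w₁ + if 4 ∈ a₂ then w₂ else 0) else 0) := by
  rw [CGame.C1uni, ← Fintype.sum_ite_mem, Fin.sum_univ_five]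
  simp +contextual only [CGame.load, Matrix.cons_val, ↓reduceIte, zero_mul, zero_add, add_zero]

theorem C2uni_eq (a₁ a₂ : Finset (Fin 5)) :
    (lowerBoundGame w₁ w₂ h₂ hle).C2uni a₁ a₂ =
      (if 0 ∈ a₂ then w₁ ^ 2 else 0) + (if 1 ∈ a₂ then w₁ ^ 2 - w₂ ^ 2 else 0) +
        (if 2 ∈ a₂ then w₂ * ((if 2 ∈ a₁ then w₁ else 0) + w₂) else 0) +
        (if 3 ∈ a₂ then w₁ * ((if 3 ∈ a₁ then w₁ else 0) + w₂) else 0) +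
        (if 4 ∈ a₂ then w₂ * ((if 4 ∈ a₁ then w₁ else 0) + w₂) else 0) := by
  rw [CGame.C2uni, ← Fintype.sum_ite_mem, Fin.sum_univ_five]
  simp +contextual only [CGame.load, Matrix.cons_val, ↓reduceIte, zero_mul, zero_add, add_zero]

theorem C1uni_against_equilibrium {b : Finset (Fin 5)}
    (hb : b ∈ (lowerBoundGame w₁ w₂ h₂ hle).A1) :
    (lowerBoundGame w₁ w₂ h₂ hle).C1uni b equilibrium₂ =
      if b = equilibrium₂ then (w₁ + w₂) ^ 2 else w₁ ^ 2 + w₁ * w₂ + w₂ ^ 2 := by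
  simp only [mem_insert, mem_singleton] at hb
  rw [C1uni_eq]
  rcases hb with rfl | rfl | rfl | rfl
  all_goals
    simp +decide only [↓reduceIte]
    ring

theorem C2uni_against_equilibrium {b : Finset (Fin 5)}
    (hb : b ∈ (lowerBoundGame w₁ w₂ h₂ hle).A2) :
    (lowerBoundGame w₁ w₂ h₂ hle).C2uni equilibrium₁ b =
      if b = equilibrium₁ then (w₁ + w₂) ^ 2 else w₁ ^ 2 + w₁ * w₂ + w₂ ^ 2 := by
  simp only [mem_insert, mem_singleton] at hb
  rw [C2uni_eq]
  rcases hb with rfl | rfl | rfl | rfl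
  all_goals
    simp +decide only [↓reduceIte]
    ring

theorem isProfile_equilibrium :
    (lowerBoundGame w₁ w₂ h₂ hle).IsProfile equilibrium₁ equilibrium₂ := by
  simp [CGame.IsProfile]

theorem isProfile_optimum :
    (lowerBoundGame w₁ w₂ h₂ hle).IsProfile optimum₁ optimum₂ := by
  simp [CGame.IsProfile]

theorem C1uni_equilibrium :
    (lowerBoundGame w₁ w₂ h₂ hle).C1uni equilibrium₁ equilibrium₂ = w₁ ^ 2 + w₁ * w₂ + w₂ ^ 2 :=
  (C1uni_against_equilibrium h₂ hle (isProfile_equilibrium h₂ hle).1).trans (if_neg (by decide))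

theorem C2uni_equilibrium :
    (lowerBoundGame w₁ w₂ h₂ hle).C2uni equilibrium₁ equilibrium₂ = w₁ ^ 2 + w₁ * w₂ + w₂ ^ 2 :=
  (C2uni_against_equilibrium h₂ hle (isProfile_equilibrium h₂ hle).2).trans (if_neg (by decide))

theorem isNashUni_equilibrium :
    (lowerBoundGame w₁ w₂ h₂ hle).IsNashUni equilibrium₁ equilibrium₂ := by
  have hcopy : w₁ ^ 2 + w₁ * w₂ + w₂ ^ 2 ≤ (w₁ + w₂) ^ 2 := by
    linarith [mul_nonneg (h₂.trans hle) h₂]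
  refine ⟨isProfile_equilibrium h₂ hle, fun b hb => ?_, fun b hb => ?_⟩
  · rw [C1uni_equilibrium, C1uni_against_equilibrium h₂ hle hb]
    split_ifs <;> first | exact hcopy | exact le_rfl
  · rw [C2uni_equilibrium, C2uni_against_equilibrium h₂ hle hb]
    split_ifs <;> first | exact hcopy | exact le_rfl

theorem Cuni_equilibrium :
    (lowerBoundGame w₁ w₂ h₂ hle).Cuni equilibrium₁ equilibrium₂ =
      2 * (w₁ ^ 2 + w₁ * w₂ + w₂ ^ 2) := by
  rw [CGame.Cuni, C1uni_equilibrium, C2uni_equilibrium, two_mul]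

theorem Cuni_optimum :
    (lowerBoundGame w₁ w₂ h₂ hle).Cuni optimum₁ optimum₂ = (w₁ + w₂) ^ 2 := by
  rw [CGame.Cuni, C1uni_eq, C2uni_eq]
  simp +decide only [↓reduceIte]
  ring

end lowerBoundGame

theorem poa_sym_uniform_lower_top_general (w₁ w₂ : ℝ) (h₁ : 0 ≤ w₁) (h₂ : 0 ≤ w₂)
    (hpos : 0 < w₁ + w₂) :
    ∃ (G : CGame w₁ w₂), G.Symm ∧
      ∃ a₁ a₂ b₁ b₂ : Finset (Fin G.n),
        G.IsNashUni a₁ a₂ ∧ G.IsProfile b₁ b₂ ∧ 0 < G.Cuni b₁ b₂ ∧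
        G.Cuni a₁ a₂ =
          (2 * (w₁ ^ 2 + w₁ * w₂ + w₂ ^ 2) / (w₁ + w₂) ^ 2) * G.Cuni b₁ b₂ := by
  wlog hle : w₂ ≤ w₁ generalizing w₁ w₂ with hordered
  · obtain ⟨G, hsymm, a₁, a₂, b₁, b₂, hnash, hprofile, hcost, hratio⟩ :=
      hordered w₂ w₁ h₂ h₁ (by rwa [add_comm]) (le_of_not_ge hle)
    refine ⟨G.swap, Eq.symm hsymm, a₂, a₁, b₂, b₁, hnash.swap, hprofile.swap, ?_, ?_⟩
    · rwa [G.Cuni_swap]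
    · rw [G.Cuni_swap, G.Cuni_swap, hratio]
      ring
  refine ⟨lowerBoundGame w₁ w₂ h₂ hle, rfl, _, _, _, _,
    lowerBoundGame.isNashUni_equilibrium h₂ hle, lowerBoundGame.isProfile_optimum h₂ hle, ?_, ?_⟩
  · rw [lowerBoundGame.Cuni_optimum]
    positivity
  · rw [lowerBoundGame.Cuni_equilibrium, lowerBoundGame.Cuni_optimum,
      div_mul_cancel₀ _ (pow_ne_zero 2 hpos.ne')]

/-- matching lower-bound instance for symmetric simultaneous
uniformly weighted games, case `w₁ ≥ τw₂`. -/
theorem poa_sym_uniform_lower_top (w₁ w₂ : ℝ) (h₁ : 0 < w₁) (h₂ : 0 < w₂) (τ : ℝ)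
    (hτ : τ = (2 * (62 - 3 * Real.sqrt 183) ^ ((1 : ℝ) / 3) + (62 + 3 * Real.sqrt 183) ^ ((1 : ℝ) / 3)) / 3)
    (hlo : τ * w₂ ≤ w₁) :
    ∃ (G : CGame w₁ w₂), G.Symm ∧
      ∃ a₁ a₂ b₁ b₂ : Finset (Fin G.n),
        G.IsNashUni a₁ a₂ ∧ G.IsProfile b₁ b₂ ∧ 0 < G.Cuni b₁ b₂ ∧
        G.Cuni a₁ a₂ =
          (2 * (w₁ ^ 2 + w₁ * w₂ + w₂ ^ 2) / (w₁ + w₂) ^ 2) * G.Cuni b₁ b₂ :=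
  poa_sym_uniform_lower_top_general w₁ w₂ h₁.le h₂.le (add_pos h₁ h₂)
end

section
/- Let w₁, w₂ ≥ 0 with w₁ + w₂ > 0. In every symmetric weighted two-player congestion game with weights w₁, w₂ and uniform costs, every pure Nash equilibrium A and every action profile B satisfy C(A) ≤ 2 · C(B). -/
open Finset Real

/-!
Let `W = w₁ + w₂` and let `S(b)` be the cost of an action `b` when every resource of `b` carries
the load `W`. No load exceeds `W`, so at an equilibrium `A` each player, who could switch to `b`,
pays at most `S(b)`; hence `C(A) ≤ 2 S(b₁)` and `C(A) ≤ 2 S(b₂)`. Average these two bounds with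
the weights `w₁ / W` and `w₂ / W`. Under the profile `(b₁, b₂)` the resources of `bᵢ` have load at
least `wᵢ`, and `wᵢ (α + β W) ≤ W (α + β wᵢ)`, so `(wᵢ / W) S(bᵢ) ≤ Cᵢ(b₁, b₂)`.
-/

namespace CGame

variable {w₁ w₂ : ℝ} (G : CGame w₁ w₂) {a₁ a₂ b : Finset (Fin G.n)}

/-- The cost of an action when both players use each of its resources. It is the cost of either
player when both choose this action. -/
def fullLoadCost (b : Finset (Fin G.n)) : ℝ :=
  ∑ r ∈ b, (G.α r + G.β r * (w₁ + w₂))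

section Load

variable {r : Fin G.n}

lemma load_le_add (h₁ : 0 ≤ w₁) (h₂ : 0 ≤ w₂) : G.load a₁ a₂ r ≤ w₁ + w₂ := by
  unfold load
  gcongr <;> split_ifs <;> simp [h₁, h₂]

lemma left_le_load (h₂ : 0 ≤ w₂) (hr : r ∈ a₁) : w₁ ≤ G.load a₁ a₂ r := by
  rw [load, if_pos hr]
  exact le_add_of_nonneg_right (ite_nonneg h₂ le_rfl)

lemma right_le_load (h₁ : 0 ≤ w₁) (hr : r ∈ a₂) : w₂ ≤ G.load a₁ a₂ r := by
  rw [load, if_pos hr]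
  exact le_add_of_nonneg_left (ite_nonneg h₁ le_rfl)

end Load

lemma sum_cost_le_fullLoadCost (h₁ : 0 ≤ w₁) (h₂ : 0 ≤ w₂) (a₁ a₂ b : Finset (Fin G.n)) :
    ∑ r ∈ b, (G.α r + G.β r * G.load a₁ a₂ r) ≤ G.fullLoadCost b := by
  unfold fullLoadCost
  gcongr with r
  · exact G.β_nonneg r
  · exact G.load_le_add h₁ h₂

lemma mul_fullLoadCost_le_mul_sum_cost {w : ℝ} (hW : 0 ≤ w₁ + w₂) (hw : w ≤ w₁ + w₂)
    (hload : ∀ r ∈ b, w ≤ G.load a₁ a₂ r) :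
    w * G.fullLoadCost b ≤ (w₁ + w₂) * ∑ r ∈ b, (G.α r + G.β r * G.load a₁ a₂ r) := by
  simp only [fullLoadCost, mul_sum]
  refine sum_le_sum fun r hr => ?_
  have hα := G.α_nonneg r
  have hβ := G.β_nonneg r
  calc w * (G.α r + G.β r * (w₁ + w₂))
      = w * G.α r + (w₁ + w₂) * (G.β r * w) := by ring
    _ ≤ (w₁ + w₂) * G.α r + (w₁ + w₂) * (G.β r * G.load a₁ a₂ r) := by
        gcongr
        exact hload r hr
    _ = (w₁ + w₂) * (G.α r + G.β r * G.load a₁ a₂ r) := by ring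

lemma mul_add_mul_fullLoadCost_le_mul_Cuni (h₁ : 0 ≤ w₁) (h₂ : 0 ≤ w₂)
    (b₁ b₂ : Finset (Fin G.n)) :
    w₁ * G.fullLoadCost b₁ + w₂ * G.fullLoadCost b₂ ≤ (w₁ + w₂) * G.Cuni b₁ b₂ := by
  rw [Cuni, mul_add]
  have hW : 0 ≤ w₁ + w₂ := add_nonneg h₁ h₂
  exact add_le_add
    (G.mul_fullLoadCost_le_mul_sum_cost hW (le_add_of_nonneg_right h₂)
      fun _ => G.left_le_load h₂)
    (G.mul_fullLoadCost_le_mul_sum_cost hW (le_add_of_nonneg_left h₁)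
      fun _ => G.right_le_load h₁)

variable {G} in
lemma IsNashUni.Cuni_le_two_mul_fullLoadCost (hA : G.IsNashUni a₁ a₂) (h₁ : 0 ≤ w₁)
    (h₂ : 0 ≤ w₂) (hb₁ : b ∈ G.A1) (hb₂ : b ∈ G.A2) :
    G.Cuni a₁ a₂ ≤ 2 * G.fullLoadCost b := by
  obtain ⟨-, hN₁, hN₂⟩ := hA
  rw [Cuni, two_mul]
  exact add_le_add ((hN₁ b hb₁).trans (G.sum_cost_le_fullLoadCost h₁ h₂ b a₂ b))
    ((hN₂ b hb₂).trans (G.sum_cost_le_fullLoadCost h₁ h₂ a₁ b b))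

end CGame

theorem poa_sym_uniform_two_general {w₁ w₂ : ℝ} (h₁ : 0 ≤ w₁) (h₂ : 0 ≤ w₂)
    (hsum : 0 < w₁ + w₂) (G : CGame w₁ w₂) {a₁ a₂ b₁ b₂ : Finset (Fin G.n)}
    (hA : G.IsNashUni a₁ a₂) (hB : G.IsProfile b₁ b₂) (hswap : G.IsProfile b₂ b₁) :
    G.Cuni a₁ a₂ ≤ 2 * G.Cuni b₁ b₂ := by
  have hS₁ := hA.Cuni_le_two_mul_fullLoadCost h₁ h₂ hB.1 hswap.2
  have hS₂ := hA.Cuni_le_two_mul_fullLoadCost h₁ h₂ hswap.1 hB.2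
  refine le_of_mul_le_mul_left ?_ hsum
  calc (w₁ + w₂) * G.Cuni a₁ a₂
      = w₁ * G.Cuni a₁ a₂ + w₂ * G.Cuni a₁ a₂ := add_mul ..
    _ ≤ w₁ * (2 * G.fullLoadCost b₁) + w₂ * (2 * G.fullLoadCost b₂) := by gcongr
    _ = 2 * (w₁ * G.fullLoadCost b₁ + w₂ * G.fullLoadCost b₂) := by ring
    _ ≤ 2 * ((w₁ + w₂) * G.Cuni b₁ b₂) := by
        gcongr
        exact G.mul_add_mul_fullLoadCost_le_mul_Cuni h₁ h₂ b₁ b₂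
    _ = (w₁ + w₂) * (2 * G.Cuni b₁ b₂) := mul_left_comm ..

/-- price of anarchy upper bound of `2` for symmetric simultaneous
uniformly weighted two-player congestion games. -/
theorem poa_sym_uniform_two (w₁ w₂ : ℝ) (h₁ : 0 ≤ w₁) (h₂ : 0 ≤ w₂)
    (hsum : 0 < w₁ + w₂) (G : CGame w₁ w₂) (hsym : G.Symm)
    (a₁ a₂ b₁ b₂ : Finset (Fin G.n))
    (hA : G.IsNashUni a₁ a₂) (hB : G.IsProfile b₁ b₂) :
    G.Cuni a₁ a₂ ≤ 2 * G.Cuni b₁ b₂ := by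
  have hswap : G.IsProfile b₂ b₁ := ⟨Eq.ge hsym hB.2, Eq.le hsym hB.1⟩
  exact poa_sym_uniform_two_general h₁ h₂ hsum G hA hB hswap
end
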